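/- arXiv:2605.02254 — 4 statements merged into one kernel-verified Lean document; each statement's English description precedes it below -/
import Mathlib

section
/- Let n = 2m with m ≥ 3 and let S = {ba, ba^{m−1}, ba^{m+1}, ba^{n−1}} ⊆ D_n. Then: (i) if m is odd, Cay(D_n, S) exhibits PST at the minimum time 2m; (ii) if m ≡ 0 (mod 4), Cay(D_n, S) exhibits no PST, i.e., for every positive integer τ and all distinct vertices u, v, T_τ(P) e_u ≠ e_v; (iii) if m ≡ 2 (mod 4), Cay(D_n, S) exhibits PST at the minimum time m. -/
/-!
The elements of `S` are the reflections `b a^c` with `c = ±1, m ± 1`, so `P` sends the basis vector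
at `g` to the average of the basis vectors at `b g a^c`. Writing `s` for left multiplication by `b`,
`x` for right multiplication by `a` (these commute), and `E = (1 + x^m)/2`, an idempotent because
`x^{2m} = 1`, this says `P = E · (s x + s x⁻¹)/2`. As `s² = 1`, the element `s x` has inverse
`s x⁻¹`, and the Chebyshev recursion gives
`T_τ(P) = E · s^τ (x^τ + x^{-τ})/2 + T_τ(0) (1 - E)`
(`chebP_mulVec`).

Compare `T_τ(P) e_u = e_v` on the range of `1 - E`: for `u ≠ v` it forces `v = u a^m` and
`T_τ(0) = -1`, that is, `τ ≡ 2 (mod 4)`. On the range of `E` it forces `m ∣ τ`. Conversely these two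
conditions on `τ` give transfer from `u` to `u a^m`. Hence PST between distinct vertices occurs at
time `τ` exactly when `τ ≡ 2 (mod 4)` and `m ∣ τ` (`mod_dvd_of_PST`, `PST_of_mod_dvd`), and the
three cases are arithmetic.
-/


open Polynomial Matrix

noncomputable section

namespace PaperPST

/-! ### Grover-walk PST data for Cayley graphs over a general finite group -/

/-- The adjacency matrix of the Cayley graph `Cay(Γ, S)`: `A u v = 1` iff `u * v⁻¹ ∈ S`. -/
def adjG (Γ : Type*) [Group Γ] [Fintype Γ] [DecidableEq Γ] (S : Finset Γ) : Matrix Γ Γ ℂ :=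
  Matrix.of fun u v => if u * v⁻¹ ∈ S then 1 else 0

/-- The discriminant matrix `P = (1/|S|) A` of `Cay(Γ, S)`. -/
def discG (Γ : Type*) [Group Γ] [Fintype Γ] [DecidableEq Γ] (S : Finset Γ) : Matrix Γ Γ ℂ :=
  (S.card : ℂ)⁻¹ • adjG Γ S

/-- `T_τ(P)`, the `τ`-th Chebyshev polynomial of the first kind evaluated at the
discriminant matrix of `Cay(Γ, S)`. -/
def chebG (Γ : Type*) [Group Γ] [Fintype Γ] [DecidableEq Γ] (S : Finset Γ) (τ : ℕ) :
    Matrix Γ Γ ℂ :=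
  Polynomial.aeval (discG Γ S) (Polynomial.Chebyshev.T ℂ τ)

/-- Perfect state transfer between vertices `u` and `v` of `Cay(Γ, S)` at time `τ`:
`T_τ(P) e_u = e_v`. -/
def PSTG (Γ : Type*) [Group Γ] [Fintype Γ] [DecidableEq Γ] (S : Finset Γ) (τ : ℕ)
    (u v : Γ) : Prop :=
  chebG Γ S τ *ᵥ Pi.single u 1 = Pi.single v 1

/-- Evaluation of the `τ`-th Chebyshev polynomial of the first kind at a complex number. -/
def Teval (τ : ℕ) (x : ℂ) : ℂ := (Polynomial.Chebyshev.T ℂ τ).eval x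

/-! ### Specialization to the dihedral group `D_n` -/

/-- Test whether an element of the dihedral group is a rotation `a^k`. -/
def isRot {n : ℕ} : DihedralGroup n → Bool
  | .r _ => true
  | .sr _ => false

/-- The adjacency matrix of the Cayley graph `Cay(D_n, S)`. -/
def adjC (n : ℕ) (S : Finset (DihedralGroup n)) :
    Matrix (DihedralGroup n) (DihedralGroup n) ℂ :=
  Matrix.of fun u v => if u * v⁻¹ ∈ S then 1 else 0

/-- The discriminant matrix `P = (1/|S|) A` of `Cay(D_n, S)`. -/
def disc (n : ℕ) (S : Finset (DihedralGroup n)) :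
    Matrix (DihedralGroup n) (DihedralGroup n) ℂ :=
  (S.card : ℂ)⁻¹ • adjC n S

/-- `T_τ(P)`, the `τ`-th Chebyshev polynomial of the first kind evaluated at the
discriminant matrix. -/
def chebP (n : ℕ) [NeZero n] (S : Finset (DihedralGroup n)) (τ : ℕ) :
    Matrix (DihedralGroup n) (DihedralGroup n) ℂ :=
  Polynomial.aeval (disc n S) (Polynomial.Chebyshev.T ℂ τ)

/-- Perfect state transfer between vertices `u` and `v` of `Cay(D_n, S)` at time `τ`:
`T_τ(P) e_u = e_v`. -/
def PST (n : ℕ) [NeZero n] (S : Finset (DihedralGroup n)) (τ : ℕ)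
    (u v : DihedralGroup n) : Prop :=
  chebP n S τ *ᵥ Pi.single u 1 = Pi.single v 1

/-- `ω = e^{2πi/n}`. -/
def omega (n : ℕ) : ℂ := Complex.exp (2 * Real.pi * Complex.I / n)

/-- `η_h(C) = Σ_{0 ≤ k ≤ n-1, a^k ∈ C} ω^{hk}`. -/
def eta (n : ℕ) (h : ℕ) (C : Finset (DihedralGroup n)) : ℂ :=
  ∑ k ∈ Finset.range n, if DihedralGroup.r (k : ZMod n) ∈ C then omega n ^ (h * k) else 0

/-- `S_1 = S ∩ ⟨a⟩`. -/
def S1 (n : ℕ) (S : Finset (DihedralGroup n)) : Finset (DihedralGroup n) :=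
  S.filter fun x => isRot x

/-- `S_2 = bS ∩ ⟨a⟩`, i.e. `{a^k : b a^k ∈ S}`. -/
def S2 (n : ℕ) (S : Finset (DihedralGroup n)) : Finset (DihedralGroup n) :=
  (S.image fun s => DihedralGroup.sr 0 * s).filter fun x => isRot x

/-- `S_2⁻¹ = {s⁻¹ : s ∈ S_2}`. -/
def S2inv (n : ℕ) (S : Finset (DihedralGroup n)) : Finset (DihedralGroup n) :=
  (S2 n S).image fun x => x⁻¹

/-- The number of `a^k ∈ C` with `0 ≤ k ≤ n-1` and `k % 2 = p`. -/
def dcnt (n : ℕ) (C : Finset (DihedralGroup n)) (p : ℕ) : ℕ :=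
  ((Finset.range n).filter fun k => k % 2 = p ∧ DihedralGroup.r (k : ZMod n) ∈ C).card

/-- Vertex labels `0, …, 2n-1`: label `u < n` is `a^u`, and label `n ≤ u < 2n` is `b a^{u-n}`. -/
def lab (n : ℕ) (u : ℕ) : DihedralGroup n :=
  if u < n then DihedralGroup.r (u : ZMod n) else DihedralGroup.sr ((u - n : ℕ) : ZMod n)

/-- `Cay(D_n, S)` is a normal Cayley graph if `S` is closed under conjugation. -/
def IsNormalCay (n : ℕ) (S : Finset (DihedralGroup n)) : Prop :=
  ∀ g : DihedralGroup n, ∀ s ∈ S, g * s * g⁻¹ ∈ S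

/-- `Cay(D_n, S)` exhibits PST at the minimum time `τ`. -/
def exhibitsMinPST (n : ℕ) [NeZero n] (S : Finset (DihedralGroup n)) (τ : ℕ) : Prop :=
  (∃ u v : DihedralGroup n, u ≠ v ∧ PST n S τ u v) ∧
  ∀ σ : ℕ, 1 ≤ σ → σ < τ → ∀ u v : DihedralGroup n, u ≠ v → ¬ PST n S σ u v

/-! ### Eigenvector candidates -/

/-- The all-ones vector. -/
def w1 (n : ℕ) : DihedralGroup n → ℂ := fun _ => 1

/-- The vector which is `1` on `G_0` and `-1` on `G_1`. -/
def w2 (n : ℕ) : DihedralGroup n → ℂ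
  | .r _ => 1
  | .sr _ => -1

/-- The vector with entry `(-1)^k` at `a^k` and `(-1)^k` at `b a^k`. -/
def w3 (n : ℕ) : DihedralGroup n → ℂ
  | .r k => (-1) ^ k.val
  | .sr k => (-1) ^ k.val

/-- The vector with entry `(-1)^k` at `a^k` and `(-1)^{k+1}` at `b a^k`. -/
def w4 (n : ℕ) : DihedralGroup n → ℂ
  | .r k => (-1) ^ k.val
  | .sr k => (-1) ^ (k.val + 1)

/-- The vector with entry `ω^{hk}` at `a^k` and `0` at `b a^k`. -/
def uv1 (n h : ℕ) : DihedralGroup n → ℂ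
  | .r k => omega n ^ (h * k.val)
  | .sr _ => 0

/-- The vector with entry `0` at `a^k` and `ω^{hk}` at `b a^k`. -/
def uv2 (n h : ℕ) : DihedralGroup n → ℂ
  | .r _ => 0
  | .sr k => omega n ^ (h * k.val)

/-- The vector with entry `0` at `a^k` and `ω^{-hk}` at `b a^k`. -/
def uv3 (n h : ℕ) : DihedralGroup n → ℂ
  | .r _ => 0
  | .sr k => (omega n)⁻¹ ^ (h * k.val)

/-- The vector with entry `ω^{-hk}` at `a^k` and `0` at `b a^k`. -/
def uv4 (n h : ℕ) : DihedralGroup n → ℂ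
  | .r k => (omega n)⁻¹ ^ (h * k.val)
  | .sr _ => 0

/-- The vector with entry `conj(ℓ)·ω^{hk}` at `a^k` and `ω^{hk}` at `b a^k`. -/
def vv1 (n h : ℕ) (ℓ : ℂ) : DihedralGroup n → ℂ
  | .r k => (starRingEnd ℂ) ℓ * omega n ^ (h * k.val)
  | .sr k => omega n ^ (h * k.val)

/-- The vector with entry `ω^{-hk}` at `a^k` and `conj(ℓ)·ω^{-hk}` at `b a^k`. -/
def vv2 (n h : ℕ) (ℓ : ℂ) : DihedralGroup n → ℂ
  | .r k => (omega n)⁻¹ ^ (h * k.val)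
  | .sr k => (starRingEnd ℂ) ℓ * (omega n)⁻¹ ^ (h * k.val)

/-- The vector with entry `-ω^{hk}` at `a^k` and `ℓ·ω^{hk}` at `b a^k`. -/
def vv3 (n h : ℕ) (ℓ : ℂ) : DihedralGroup n → ℂ
  | .r k => -(omega n ^ (h * k.val))
  | .sr k => ℓ * omega n ^ (h * k.val)

/-- The vector with entry `ℓ·ω^{-hk}` at `a^k` and `-ω^{-hk}` at `b a^k`. -/
def vv4 (n h : ℕ) (ℓ : ℂ) : DihedralGroup n → ℂ
  | .r k => ℓ * (omega n)⁻¹ ^ (h * k.val)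
  | .sr k => -((omega n)⁻¹ ^ (h * k.val))

/-! ### The values of the Chebyshev polynomials at `0` -/

lemma T_eval_zero_add_two (k : ℕ) :
    (Chebyshev.T ℂ ((k + 2 : ℕ) : ℤ)).eval 0 = -(Chebyshev.T ℂ (k : ℤ)).eval 0 := by
  push_cast
  rw [Chebyshev.T_add_two]
  simp

lemma T_eval_zero_eq (k : ℕ) :
    (Chebyshev.T ℂ (k : ℤ)).eval 0 =
      if k % 4 = 0 then 1 else if k % 4 = 2 then -1 else 0 := by
  induction k using Nat.twoStepInduction with
  | zero => simp
  | one => simp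
  | more k ih _ =>
    rw [T_eval_zero_add_two, ih]
    have h : k % 4 < 4 := Nat.mod_lt _ (by norm_num)
    interval_cases hk : k % 4 <;> simp [Nat.add_mod, hk]

/-! ### The action of `T_τ(P)` on basis vectors -/

/-- The basis vector at `b^k u a^j`. -/
def bvec {n : ℕ} (u : DihedralGroup n) (k : ℕ) (j : ZMod n) : DihedralGroup n → ℂ :=
  Pi.single (DihedralGroup.sr 0 ^ k * u * DihedralGroup.r j) 1

lemma bvec_add_two {n : ℕ} (u : DihedralGroup n) (k : ℕ) (j : ZMod n) :
    bvec u (k + 2) j = bvec u k j := by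
  have h : (DihedralGroup.sr 0 : DihedralGroup n) ^ 2 = 1 := by
    rw [pow_two, DihedralGroup.sr_mul_self]
  simp [bvec, pow_add, h]

lemma bvec_mul_r {n : ℕ} {c : ZMod n} (hc : c + c = 0) (u g : DihedralGroup n) (k : ℕ)
    (j : ZMod n) : bvec u k j (g * DihedralGroup.r c) = bvec u k (j + c) g := by
  have hr : (DihedralGroup.r c : DihedralGroup n) * DihedralGroup.r c = 1 := by
    rw [DihedralGroup.r_mul_r, hc, DihedralGroup.one_def]
  have h : g * DihedralGroup.r c = DihedralGroup.sr 0 ^ k * u * DihedralGroup.r j ↔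
      g = DihedralGroup.sr 0 ^ k * u * DihedralGroup.r (j + c) := by
    rw [← DihedralGroup.r_mul_r, ← mul_assoc]
    constructor
    · intro h; rw [← h, mul_assoc, hr, mul_one]
    · intro h; rw [h, mul_assoc _ (DihedralGroup.r c), hr, mul_one]
  simp only [bvec, Pi.single_apply, h]

/-- The connection set `{b a, b a^{c-1}, b a^{c+1}, b a^{-1}}`, with exponents in `ZMod n`; the
theorem concerns `c = m`. -/
def conn (n : ℕ) (c : ZMod n) : Finset (DihedralGroup n) :=
  {DihedralGroup.sr 1, DihedralGroup.sr (c - 1), DihedralGroup.sr (c + 1), DihedralGroup.sr (-1)}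

lemma disc_mulVec_bvec {n : ℕ} [NeZero n] {c : ZMod n} (hc : c + c = 0)
    (hcard : (conn n c).card = 4) (u : DihedralGroup n) (k : ℕ) (j : ZMod n) :
    disc n (conn n c) *ᵥ bvec u k j = (1 / 4 : ℂ) •
      (bvec u (k + 1) (j + 1) + bvec u (k + 1) (j - 1) +
        bvec u (k + 1) (j + 1 + c) + bvec u (k + 1) (j - 1 + c)) := by
  -- The indicator of a four-element set is the sum of the indicators of its elements.
  have hind : ∀ x : DihedralGroup n, (if x ∈ conn n c then (1 : ℂ) else 0) =
      (if x = .sr 1 then 1 else 0) + (if x = .sr (-1) then 1 else 0) +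
      (if x = .sr (c + 1) then 1 else 0) + (if x = .sr (c - 1) then 1 else 0) := by
    intro x
    have hsum : ∑ y ∈ conn n c, (if x = y then (1 : ℂ) else 0) =
        (if x ∈ conn n c then (1 : ℂ) else 0) := by simp
    have h1 : ({.sr 1, .sr (c - 1), .sr (c + 1), .sr (-1)} : Finset (DihedralGroup n)).card = 4 :=
      hcard
    have n1 : (DihedralGroup.sr 1 : DihedralGroup n) ∉
        ({.sr (c - 1), .sr (c + 1), .sr (-1)} : Finset (DihedralGroup n)) := by
      intro h; rw [Finset.insert_eq_of_mem h] at h1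
      have := Finset.card_le_three (a := (DihedralGroup.sr (c - 1) : DihedralGroup n))
        (b := .sr (c + 1)) (c := .sr (-1))
      omega
    rw [Finset.card_insert_of_notMem n1] at h1
    have n2 : (DihedralGroup.sr (c - 1) : DihedralGroup n) ∉
        ({.sr (c + 1), .sr (-1)} : Finset (DihedralGroup n)) := by
      intro h; rw [Finset.insert_eq_of_mem h] at h1
      have := Finset.card_le_two (a := (DihedralGroup.sr (c + 1) : DihedralGroup n))
        (b := .sr (-1))
      omega
    rw [Finset.card_insert_of_notMem n2] at h1
    have n3 : (DihedralGroup.sr (c + 1) : DihedralGroup n) ∉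
        ({.sr (-1)} : Finset (DihedralGroup n)) := by
      intro h; rw [Finset.insert_eq_of_mem h] at h1
      simp at h1
    rw [← hsum, conn, Finset.sum_insert n1, Finset.sum_insert n2, Finset.sum_insert n3,
      Finset.sum_singleton]
    ring
  -- `b w a^d` equals `(b a^d) w` for a rotation `w` and `(b a^{-d}) w` for a reflection `w`;
  -- the exponents in the connection set are symmetric under negation.
  have key : ∀ g w : DihedralGroup n,
      (if g * w⁻¹ ∈ conn n c then (1 : ℂ) else 0) =
        (if g = .sr 0 * w * .r 1 then 1 else 0) + (if g = .sr 0 * w * .r (-1) then 1 else 0) +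
        (if g = .sr 0 * w * .r (1 + c) then 1 else 0) +
        (if g = .sr 0 * w * .r (-1 + c) then 1 else 0) := by
    intro g w
    have hmul : ∀ d : ZMod n, (if g * w⁻¹ = .sr d then (1 : ℂ) else 0) =
        if g = .sr d * w then 1 else 0 := fun d => if_congr mul_inv_eq_iff_eq_mul rfl rfl
    rw [hind, hmul, hmul, hmul, hmul]
    rcases w with i | i
    · have hr : ∀ d : ZMod n, (.sr 0 * .r i * .r d : DihedralGroup n) = .sr d * .r i := by
        intro d
        rw [DihedralGroup.sr_mul_r, DihedralGroup.sr_mul_r, DihedralGroup.sr_mul_r, zero_add,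
          add_comm]
      rw [hr, hr, hr, hr, add_comm 1 c, show -1 + c = c - 1 by ring]
    · have hsr : ∀ d : ZMod n, (.sr 0 * .sr i * .r d : DihedralGroup n) = .sr (-d) * .sr i := by
        intro d
        simp only [DihedralGroup.sr_mul_sr, DihedralGroup.r_mul_r, sub_zero, sub_neg_eq_add]
      rw [hsr, hsr, hsr, hsr, neg_neg, show -(1 + c) = c - 1 by linear_combination -hc,
        show -(-1 + c) = c + 1 by linear_combination -hc]
      ring
  ext g
  rw [disc, hcard, bvec, Matrix.smul_mulVec, Matrix.mulVec_single_one]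
  simp only [Pi.smul_apply, Pi.add_apply, Matrix.col_apply, adjC, Matrix.of_apply, key, bvec,
    Pi.single_apply, smul_eq_mul, pow_succ']
  simp only [mul_assoc, DihedralGroup.r_mul_r]
  rw [show j + (1 + c) = j + 1 + c by ring, show j + (-1 + c) = j - 1 + c by ring,
    ← sub_eq_add_neg j 1]
  norm_num

lemma chebP_zero {n : ℕ} [NeZero n] (S : Finset (DihedralGroup n)) : chebP n S 0 = 1 := by
  simp [chebP]

lemma chebP_one {n : ℕ} [NeZero n] (S : Finset (DihedralGroup n)) :
    chebP n S 1 = disc n S := by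
  simp [chebP]

lemma chebP_add_two {n : ℕ} [NeZero n] (S : Finset (DihedralGroup n)) (k : ℕ) :
    chebP n S (k + 2) = (2 : ℂ) • (disc n S * chebP n S (k + 1)) - chebP n S k := by
  simp only [chebP]
  push_cast
  rw [Chebyshev.T_add_two]
  simp [two_smul, two_mul, add_mul]

/-- Four times the component of `T_k(P) e_u` in the range of `E = (1 + x^c)/2`, where `c = m` in
the application. -/
def evenPart {n : ℕ} (c : ZMod n) (u : DihedralGroup n) (k : ℕ) : DihedralGroup n → ℂ :=
  bvec u k k + bvec u k (-k) + bvec u k (k + c) + bvec u k (-k + c)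

/-- The closed form
`T_k(P) e_u = E s^k (x^k + x^{-k})/2 e_u + T_k(0) (1 - E) e_u`. -/
lemma chebP_mulVec {n : ℕ} [NeZero n] {c : ZMod n} (hc : c + c = 0)
    (hcard : (conn n c).card = 4) (u : DihedralGroup n) (k : ℕ) :
    chebP n (conn n c) k *ᵥ bvec u 0 0 = (1 / 4 : ℂ) • evenPart c u k +
      ((Chebyshev.T ℂ (k : ℤ)).eval 0 / 2) • (bvec u 0 0 - bvec u 0 c) := by
  have hcc : ∀ j : ZMod n, j + c + c = j := fun j => by linear_combination hc
  have hP := disc_mulVec_bvec hc hcard u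
  induction k using Nat.twoStepInduction with
  | zero =>
    rw [chebP_zero, Matrix.one_mulVec]
    ext g
    simp [evenPart]
    ring
  | one =>
    rw [chebP_one, hP]
    simp [evenPart]
  | more k ih0 ih1 =>
    rw [chebP_add_two, Matrix.sub_mulVec, Matrix.smul_mulVec, ← Matrix.mulVec_mulVec, ih0, ih1,
      T_eval_zero_add_two]
    simp only [evenPart, Matrix.mulVec_add, Matrix.mulVec_sub, Matrix.mulVec_smul, hP,
      bvec_add_two, add_assoc k 1 1, one_add_one_eq_two]
    push_cast
    have a1 : (k : ZMod n) + 1 + 1 = k + 2 := by ring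
    have a2 : (k : ZMod n) + 1 - 1 = k := by ring
    have a3 : -((k : ZMod n) + 1) + 1 = -k := by ring
    have a4 : -((k : ZMod n) + 1) - 1 = -(k + 2) := by ring
    have a5 : (k : ZMod n) + 1 + c + 1 = k + 2 + c := by ring
    have a6 : (k : ZMod n) + 1 + c - 1 = k + c := by ring
    have a7 : -((k : ZMod n) + 1) + c + 1 = -k + c := by ring
    have a8 : -((k : ZMod n) + 1) + c - 1 = -(k + 2) + c := by ring
    have a9 : c + 1 + c = 0 + 1 := by linear_combination hc
    have a10 : c - 1 + c = 0 - 1 := by linear_combination hc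
    have a11 : 0 + 1 + c = c + 1 := by ring
    have a12 : 0 - 1 + c = c - 1 := by ring
    simp only [a1, a2, a3, a4, a5, a6, a7, a8, a9, a10, a11, a12, hcc]
    module

/-! ### Characterization of the transfer times -/

lemma evenPart_mul_r {n : ℕ} {c : ZMod n} (hc : c + c = 0) (u g : DihedralGroup n) (k : ℕ) :
    evenPart c u k (g * DihedralGroup.r c) = evenPart c u k g := by
  have hcc : ∀ j : ZMod n, j + c + c = j := fun j => by linear_combination hc
  simp only [evenPart, Pi.add_apply, bvec_mul_r hc, hcc]
  ring

lemma bvec_zero_zero {n : ℕ} (u : DihedralGroup n) : bvec u 0 0 = Pi.single u 1 := by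
  simp [bvec]

lemma bvec_of_even {n : ℕ} (u : DihedralGroup n) {k : ℕ} (hk : Even k) (j : ZMod n) :
    bvec u k j = bvec u 0 j := by
  obtain ⟨q, rfl⟩ := hk
  have h : (DihedralGroup.sr 0 : DihedralGroup n) ^ (q + q) = 1 := by
    rw [← two_mul, pow_mul, pow_two, DihedralGroup.sr_mul_self, one_pow]
  simp [bvec, h]

lemma natCast_half_ne_zero {n m : ℕ} (hm : 0 < m) (hnm : n = 2 * m) :
    (m : ZMod n) ≠ 0 := by
  rw [Ne, ZMod.natCast_eq_zero_iff]
  intro h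
  have := Nat.le_of_dvd hm h
  omega

lemma mul_r_ne {n : ℕ} {c : ZMod n} (hc : c ≠ 0) (u : DihedralGroup n) :
    u ≠ u * DihedralGroup.r c := by
  intro h
  have : (DihedralGroup.r c : DihedralGroup n) = 1 := by simpa using h.symm
  rw [DihedralGroup.one_def] at this
  exact hc (DihedralGroup.r.inj this)

lemma mod_dvd_of_PST {n m : ℕ} [NeZero n] (hm : 0 < m) (hnm : n = 2 * m)
    (hcard : (conn n (m : ZMod n)).card = 4) {τ : ℕ} {u v : DihedralGroup n} (huv : u ≠ v)
    (h : PST n (conn n (m : ZMod n)) τ u v) : τ % 4 = 2 ∧ m ∣ τ := by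
  have hc : (m : ZMod n) + m = 0 := by
    rw [← Nat.cast_add, ← two_mul, ← hnm, ZMod.natCast_self]
  have hc0 := natCast_half_ne_zero hm hnm
  rw [PST, ← bvec_zero_zero u, chebP_mulVec hc hcard] at h
  have hv := congrFun h v
  have hvm := congrFun h (v * DihedralGroup.r (m : ZMod n))
  have hu := congrFun h u
  simp only [Pi.add_apply, Pi.smul_apply, Pi.sub_apply, smul_eq_mul, evenPart_mul_r hc,
    bvec_mul_r hc, hc, zero_add] at hv hvm
  rw [bvec_zero_zero, Pi.single_eq_of_ne huv.symm, Pi.single_eq_same] at hv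
  rw [bvec_zero_zero, Pi.single_eq_of_ne huv.symm, Pi.single_eq_of_ne (mul_r_ne hc0 v).symm] at hvm
  -- The difference of the values at `v` and `v a^m` isolates the `1 - E` component.
  have hT : (Chebyshev.T ℂ (τ : ℤ)).eval 0 * bvec u 0 (m : ZMod n) v = -1 := by
    linear_combination hvm - hv
  have hτ : τ % 4 = 2 := by
    rw [T_eval_zero_eq, bvec, Pi.single_apply] at hT
    by_contra h2
    split_ifs at hT <;> norm_num at hT
  refine ⟨hτ, ?_⟩
  have heven : Even τ := Nat.even_iff.2 (by omega)
  by_contra hdvd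
  have hz : ∀ j : ZMod n, j ≠ 0 → bvec u 0 j u = 0 := by
    intro j hj
    rw [bvec, pow_zero, one_mul]
    exact Pi.single_eq_of_ne (mul_r_ne hj u) _
  have hcast : ∀ q : ℕ, ¬ m ∣ q → (q : ZMod n) ≠ 0 := by
    intro q hq h0
    rw [ZMod.natCast_eq_zero_iff] at h0
    exact hq ((Dvd.intro_left 2 hnm.symm).trans h0)
  have h1 := hcast τ hdvd
  have h2 : (τ : ZMod n) + m ≠ 0 := by
    exact_mod_cast hcast (τ + m) (by simpa using hdvd)
  have h3 : -(τ : ZMod n) + m ≠ 0 := by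
    intro h0; exact h2 (by linear_combination hc - h0)
  simp only [evenPart, bvec_of_even u heven, Pi.add_apply, Pi.smul_apply, Pi.sub_apply, smul_eq_mul,
    hz _ h1, hz _ h2, hz _ h3, hz _ (neg_ne_zero.2 h1), hz _ hc0, T_eval_zero_eq, hτ] at hu
  rw [bvec_zero_zero, Pi.single_eq_same, Pi.single_eq_of_ne huv] at hu
  norm_num at hu

lemma PST_of_mod_dvd {n m : ℕ} [NeZero n] (hnm : n = 2 * m)
    (hcard : (conn n (m : ZMod n)).card = 4) {τ : ℕ} (hτ : τ % 4 = 2) (hdvd : m ∣ τ)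
    (u : DihedralGroup n) :
    PST n (conn n (m : ZMod n)) τ u (u * DihedralGroup.r (m : ZMod n)) := by
  have hc : (m : ZMod n) + m = 0 := by
    rw [← Nat.cast_add, ← two_mul, ← hnm, ZMod.natCast_self]
  have heven : Even τ := Nat.even_iff.2 (by omega)
  have htarget : (Pi.single (u * DihedralGroup.r (m : ZMod n)) 1 : DihedralGroup n → ℂ) =
      bvec u 0 (m : ZMod n) := by simp [bvec]
  have hτm : (τ : ZMod n) = 0 ∨ (τ : ZMod n) = m := by
    obtain ⟨q, rfl⟩ := hdvd
    obtain ⟨t, rfl | rfl⟩ := Nat.even_or_odd' q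
    · left; push_cast; linear_combination (t : ZMod n) * hc
    · right; push_cast; linear_combination (t : ZMod n) * hc
  have hneg : -(m : ZMod n) = m := by linear_combination -hc
  rw [PST, ← bvec_zero_zero u, htarget, chebP_mulVec hc hcard, T_eval_zero_eq, hτ, evenPart]
  simp only [bvec_of_even u heven]
  rcases hτm with h | h <;> rw [h] <;> simp only [neg_zero, zero_add, hc, hneg] <;> norm_num <;>
    module

lemma card_conn {n m : ℕ} [NeZero n] (hm : 3 ≤ m) (hnm : n = 2 * m) :
    (conn n (m : ZMod n)).card = 4 := by
  have hne : ∀ a b : ℕ, a < n → b < n → a ≠ b →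
      (DihedralGroup.sr (a : ZMod n) : DihedralGroup n) ≠ .sr (b : ZMod n) := by
    intro a b ha hb hab h
    have h' := DihedralGroup.sr.inj h
    rw [ZMod.natCast_eq_natCast_iff'] at h'
    rw [Nat.mod_eq_of_lt ha, Nat.mod_eq_of_lt hb] at h'
    exact hab h'
  have e1 : (1 : ZMod n) = (1 : ℕ) := by simp
  have e2 : (m : ZMod n) - 1 = (m - 1 : ℕ) := by rw [Nat.cast_sub (by omega)]; simp
  have e3 : (m : ZMod n) + 1 = (m + 1 : ℕ) := by simp
  have e4 : (-1 : ZMod n) = (n - 1 : ℕ) := by rw [Nat.cast_sub (by omega)]; simp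
  rw [conn, e2, e3, e4, e1]
  rw [Finset.card_insert_of_notMem, Finset.card_insert_of_notMem, Finset.card_pair]
  · apply hne <;> omega
  · simp only [Finset.mem_insert, Finset.mem_singleton, not_or]
    constructor <;> apply hne <;> omega
  · simp only [Finset.mem_insert, Finset.mem_singleton, not_or]
    refine ⟨?_, ?_, ?_⟩ <;> apply hne <;> omega

theorem stmt_15 (n m : ℕ) [NeZero n] (hm : 3 ≤ m) (hnm : n = 2 * m)
    (S : Finset (DihedralGroup n))
    (hS : S = {DihedralGroup.sr ((1 : ℕ) : ZMod n), DihedralGroup.sr ((m - 1 : ℕ) : ZMod n),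
               DihedralGroup.sr ((m + 1 : ℕ) : ZMod n), DihedralGroup.sr ((n - 1 : ℕ) : ZMod n)}) :
    (Odd m → exhibitsMinPST n S (2 * m)) ∧
    (m % 4 = 0 → ∀ τ : ℕ, 1 ≤ τ → ∀ u v : DihedralGroup n, u ≠ v → ¬ PST n S τ u v) ∧
    (m % 4 = 2 → exhibitsMinPST n S m) := by
  have hSc : S = conn n (m : ZMod n) := by
    rw [hS, conn, Nat.cast_sub (by omega : 1 ≤ m), Nat.cast_sub (by omega : 1 ≤ n)]
    simp
  subst hSc
  have hcard := card_conn hm hnm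
  have hpos : 0 < m := by omega
  have hne := mul_r_ne (natCast_half_ne_zero hpos hnm) (1 : DihedralGroup n)
  refine ⟨fun hodd => ⟨⟨_, _, hne, PST_of_mod_dvd hnm hcard ?_ (Dvd.intro_left 2 rfl) 1⟩, ?_⟩,
    ?_, fun h2 => ⟨⟨_, _, hne, PST_of_mod_dvd hnm hcard h2 dvd_rfl 1⟩, ?_⟩⟩
  · obtain ⟨t, rfl⟩ := hodd
    omega
  · intro σ hσ1 hσ u v huv h
    obtain ⟨h4, q, rfl⟩ := mod_dvd_of_PST hpos hnm hcard huv h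
    -- `0 < m q < 2 m` leaves only `q = 1`, an odd time.
    have hq : q < 2 := by nlinarith
    rw [Nat.odd_iff] at hodd
    interval_cases q <;> omega
  · intro h0 τ _ u v huv h
    obtain ⟨h4, hdvd⟩ := mod_dvd_of_PST hpos hnm hcard huv h
    have := (Nat.dvd_of_mod_eq_zero h0).trans hdvd
    omega
  · intro σ hσ1 hσ u v huv h
    obtain ⟨_, hdvd⟩ := mod_dvd_of_PST hpos hnm hcard huv h
    have := Nat.le_of_dvd hσ1 hdvd
    omega

end PaperPST
end
end

section
/- Let n = 2m with m ≥ 3 and let S = {a, a^{m−1}, a^{m+1}, a^{n−1}} ⊆ D_n. Then: (i) if m is odd, Cay(D_n, S) exhibits PST at the minimum time 2m; (ii) if m ≡ 0 (mod 4), Cay(D_n, S) exhibits no PST, i.e., for every positive integer τ and all distinct vertices u, v, T_τ(P) e_u ≠ e_v; (iii) if m ≡ 2 (mod 4), Cay(D_n, S) exhibits PST at the minimum time m. -/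
/-!
The graph is two disjoint copies of the circulant graph on `ℤ/2m` with connection set
`{±1, m ± 1}`, so everything reduces to showing that perfect state transfer between distinct
vertices at time `τ` occurs exactly when `τ ≡ 2 (mod 4)` and `m ∣ τ`. The three cases of the
theorem are then elementary arithmetic.

Necessity (`PST_necessary`): if `w P = λ w`, then pairing `T_τ(P) e_u = e_v` with `w` gives
`w v = T_τ(λ) w u` (`PST_pairing`). Three eigenvectors suffice. The sign vector separating rotations
from reflections has `λ = 1`, so `u` and `v` are of the same kind. The character `a^k ↦ ω^k`
(copied to the reflections) has `λ = 0`, and `T_τ(0) ∈ {0, 1, -1}`; the value `0` is impossible,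
the value `1` gives `u = v`, so `T_τ(0) = -1`, that is `τ ≡ 2 (mod 4)`. The squared character has
`λ = cos (2π/m)` and takes equal values at `u` and `v`, so `cos (2πτ/m) = 1` and `m ∣ τ`.

Sufficiency (`PST_sufficient`): let `R` be the permutation matrix of multiplication by `a`. Then
`P = C E` with `C = (R + R⁻¹)/2` and `E = (1 + R^m)/2` an idempotent commuting with `C`. Hence
`T_k(P) = T_k(C) E + T_k(0) (1 - E)` with `T_k(C) = (R^k + R^{-k})/2` (`aeval_T_eq`). For
`m ∣ τ` and `τ ≡ 2 (mod 4)` this is `E - (1 - E) = R^m`, which moves `1` to `a^m`.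
-/

open Polynomial Matrix

noncomputable section

namespace PaperPST

/-! ### Values of Chebyshev polynomials -/

/-- `T_τ(0)` vanishes for odd `τ`, and is `1` or `-1` according to `τ mod 4` for even `τ`. -/
lemma T_zero_cases (τ : ℕ) :
    (Chebyshev.T ℂ τ).eval 0 = if τ % 4 = 2 then -1 else if τ % 4 = 0 then 1 else 0 := by
  rcases Nat.even_or_odd' τ with ⟨k, rfl | rfl⟩
  · have h : (Chebyshev.T ℂ ((2 * k : ℕ) : ℤ)).eval 0 = (-1) ^ k := by
      push_cast
      rw [Chebyshev.T_eval_two_mul_zero]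
      simp [Int.negOnePow_def]
    rw [h]
    rcases Nat.even_or_odd' k with ⟨j, rfl | rfl⟩
    · rw [if_neg (by omega), if_pos (by omega)]
      simp
    · rw [if_pos (by omega)]
      simp [pow_succ]
  · have hodd : Odd ((2 * k + 1 : ℕ) : ℤ) := ⟨k, by push_cast; ring⟩
    rw [Chebyshev.T_eval_zero_of_odd ℂ hodd, if_neg (by omega), if_neg (by omega)]

/-- The Chebyshev polynomials at `((x + y)/2) e`, for `y = x⁻¹` and an idempotent `e`. The scalar
`h` is `1/2`. -/
lemma aeval_T_eq {A : Type*} [CommRing A] [Algebra ℂ A] (x y e h : A) (hh : 2 * h = 1)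
    (hxy : x * y = 1) (he : e * e = e) (k : ℕ) :
    aeval (h * (x + y) * e) (Chebyshev.T ℂ k) =
      h * (x ^ k + y ^ k) * e + algebraMap ℂ A ((Chebyshev.T ℂ k).eval 0) * (1 - e) := by
  induction k using Nat.twoStepInduction with
  | zero => simp; linear_combination (-e) * hh
  | one => simp
  | more k ih1 ih2 =>
    have e1 : ((k + 2 : ℕ) : ℤ) = (k : ℤ) + 2 := by push_cast; ring
    have e2 : ((k + 1 : ℕ) : ℤ) = (k : ℤ) + 1 := by push_cast; ring
    rw [e2] at ih2
    rw [e1, Chebyshev.T_add_two]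
    simp only [map_sub, map_mul, aeval_X, ih1, ih2, eval_sub, eval_mul, eval_X, mul_zero,
      zero_mul, zero_sub, map_ofNat, map_neg]
    generalize algebraMap ℂ A (eval 0 (Chebyshev.T ℂ (k + 1))) = c
    generalize algebraMap ℂ A (eval 0 (Chebyshev.T ℂ k)) = d
    linear_combination
      (2 * h * (x + y) * h * (x ^ (k + 1) + y ^ (k + 1)) - 2 * h * (x + y) * c) * he
      + h * e * (x + y) * (x ^ (k + 1) + y ^ (k + 1)) * hh
      + h * e * (x ^ k + y ^ k) * hxy

/-- In the cyclic group algebra, `T_τ` of the discriminant is the shift by `m` whenever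
`τ ≡ 2 (mod 4)` and `m ∣ τ`. -/
lemma aeval_T_comm {A : Type*} [CommRing A] [Algebra ℂ A] (m : ℕ) (hm : 1 ≤ m) (x : A)
    (hx : x ^ (2 * m) = 1) (τ : ℕ) (h4 : τ % 4 = 2) (hd : m ∣ τ) :
    aeval ((4 : ℂ)⁻¹ • (x + x ^ (m - 1) + x ^ (m + 1) + x ^ (2 * m - 1))) (Chebyshev.T ℂ τ)
      = x ^ m := by
  obtain ⟨h, hdef⟩ : ∃ h : A, h = algebraMap ℂ A 2⁻¹ := ⟨_, rfl⟩
  have hh : 2 * h = 1 := by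
    rw [hdef, show (2 : A) = algebraMap ℂ A 2 from (map_ofNat _ 2).symm, ← map_mul]
    norm_num
  have h4' : algebraMap ℂ A 4⁻¹ = h * h := by
    rw [hdef, ← map_mul]; norm_num
  obtain ⟨j, rfl⟩ : ∃ j, m = j + 1 := ⟨m - 1, by omega⟩
  obtain ⟨z, hz⟩ : ∃ z, z = x ^ (j + 1) := ⟨_, rfl⟩
  obtain ⟨y, hy⟩ : ∃ y, y = x ^ (2 * j + 1) := ⟨_, rfl⟩
  have hzz : z * z = 1 := by rw [hz, ← hx]; ring
  have hxy : x * y = 1 := by rw [hy, ← hx]; ring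
  have hzy : x ^ j = z * y := by
    calc x ^ j = x ^ j * x ^ (2 * (j + 1)) := by rw [hx, mul_one]
      _ = z * y := by rw [hz, hy]; ring
  have he : (h * (1 + z)) * (h * (1 + z)) = h * (1 + z) := by
    linear_combination h * h * hzz + h * (1 + z) * hh
  have hp : (4 : ℂ)⁻¹ • (x + x ^ (j + 1 - 1) + x ^ (j + 1 + 1) + x ^ (2 * (j + 1) - 1))
      = h * (x + y) * (h * (1 + z)) := by
    rw [Algebra.smul_def, h4', show j + 1 - 1 = j by omega,
      show 2 * (j + 1) - 1 = 2 * j + 1 by omega, hzy, ← hy, pow_succ x (j + 1), ← hz]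
    ring
  rw [hp, aeval_T_eq x y _ h hh hxy he, T_zero_cases, if_pos h4, ← hz]
  obtain ⟨t, rfl⟩ := hd
  -- Powers of `z` fix `e = h (1 + z)`, and so do those of `z⁻¹ = y ^ (j + 1)`.
  have hfix : ∀ t : ℕ, z ^ t * (1 + z) = 1 + z := by
    intro t
    induction t with
    | zero => simp
    | succ t ih => linear_combination z * ih + hzz
  have hym : y ^ (j + 1) = z := by
    have : z * y ^ (j + 1) = 1 := by rw [hz, ← mul_pow, hxy, one_pow]
    linear_combination z * this - y ^ (j + 1) * hzz
  rw [pow_mul x, pow_mul y, hym, ← hz, map_neg, map_one]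
  linear_combination 2 * h * h * hfix t + (h * (1 + z) + (1 + z)) * hh

/-- `aeval_T_comm` for an element of a possibly noncommutative algebra. -/
lemma aeval_T_shift {B : Type*} [Ring B] [Algebra ℂ B] (m : ℕ) (hm : 1 ≤ m) (x : B)
    (hx : x ^ (2 * m) = 1) (τ : ℕ) (h4 : τ % 4 = 2) (hd : m ∣ τ) :
    aeval ((4 : ℂ)⁻¹ • (x + x ^ (m - 1) + x ^ (m + 1) + x ^ (2 * m - 1))) (Chebyshev.T ℂ τ)
      = x ^ m := by
  let f : ℂ[X] := X ^ (2 * m) - 1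
  let r : AdjoinRoot f := AdjoinRoot.root f
  have hr : r ^ (2 * m) = 1 := by
    have h0 : AdjoinRoot.mk f (X ^ (2 * m) - 1) = 0 := AdjoinRoot.mk_self
    rw [map_sub, map_pow, AdjoinRoot.mk_X, map_one] at h0
    exact sub_eq_zero.mp h0
  have key := aeval_T_comm m hm r hr τ h4 hd
  -- `AdjoinRoot.liftAlgHom` needs a commutative target, so the quotient is lifted by hand.
  let φ : AdjoinRoot f →ₐ[ℂ] B := Ideal.Quotient.liftₐ (Ideal.span {f}) (aeval x) (by
    intro a ha
    obtain ⟨b, rfl⟩ := Ideal.mem_span_singleton'.mp ha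
    simp [f, hx])
  have hφ : φ r = x := by
    have : φ r = aeval x (X : ℂ[X]) := rfl
    simpa using this
  have := congrArg φ key
  rw [← Polynomial.aeval_algHom_apply] at this
  simpa [hφ] using this

/-! ### The discriminant matrix -/

/-- The permutation matrix of left multiplication by `g`. -/
def leftMat (n : ℕ) (g : DihedralGroup n) : Matrix (DihedralGroup n) (DihedralGroup n) ℂ :=
  Matrix.of fun u v => if u = g * v then 1 else 0

lemma leftMat_mul (n : ℕ) [NeZero n] (g h : DihedralGroup n) :
    leftMat n g * leftMat n h = leftMat n (g * h) := by
  ext u v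
  simp [leftMat, Matrix.mul_apply, mul_assoc]

lemma leftMat_one (n : ℕ) [NeZero n] : leftMat n 1 = 1 := by
  ext u v
  simp [leftMat, Matrix.one_apply]

lemma leftMat_pow (n : ℕ) [NeZero n] (g : DihedralGroup n) (k : ℕ) :
    leftMat n g ^ k = leftMat n (g ^ k) := by
  induction k with
  | zero => simp [leftMat_one]
  | succ k ih => rw [pow_succ, ih, leftMat_mul, pow_succ]

lemma leftMat_r (n : ℕ) [NeZero n] (k : ℕ) :
    leftMat n (DihedralGroup.r (k : ZMod n)) = leftMat n (DihedralGroup.r 1) ^ k := by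
  rw [leftMat_pow, DihedralGroup.r_one_pow]

lemma adjC_eq_sum (n : ℕ) [NeZero n] (S : Finset (DihedralGroup n)) :
    adjC n S = ∑ s ∈ S, leftMat n s := by
  ext u v
  simp [adjC, leftMat, Matrix.sum_apply, ← mul_inv_eq_iff_eq_mul]

/-- The connection set of the theorem. -/
def connSet (n m : ℕ) : Finset (DihedralGroup n) :=
  {DihedralGroup.r ((1 : ℕ) : ZMod n), DihedralGroup.r ((m - 1 : ℕ) : ZMod n),
    DihedralGroup.r ((m + 1 : ℕ) : ZMod n), DihedralGroup.r ((n - 1 : ℕ) : ZMod n)}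

lemma r_natCast_ne (n a b : ℕ) (ha : a < n) (hb : b < n) (hab : a ≠ b) :
    DihedralGroup.r (a : ZMod n) ≠ DihedralGroup.r (b : ZMod n) := by
  intro h
  injection h with h
  rw [ZMod.natCast_eq_natCast_iff'] at h
  rw [Nat.mod_eq_of_lt ha, Nat.mod_eq_of_lt hb] at h
  exact hab h

/-- The four elements of `connSet` are distinct as soon as `m ≥ 3`. -/
lemma sum_connSet {M : Type*} [AddCommMonoid M] (n m : ℕ) (hm : 3 ≤ m) (hnm : n = 2 * m)
    (f : DihedralGroup n → M) :
    ∑ s ∈ connSet n m, f s = f (.r (1 : ℕ)) + (f (.r (m - 1 : ℕ)) + (f (.r (m + 1 : ℕ))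
      + f (.r (n - 1 : ℕ)))) := by
  have h (a b : ℕ) (ha : a < n) (hb : b < n) (hab : a ≠ b) := r_natCast_ne n a b ha hb hab
  unfold connSet
  rw [Finset.sum_insert, Finset.sum_insert, Finset.sum_insert, Finset.sum_singleton]
  · simpa only [Finset.mem_singleton] using h _ _ (by omega) (by omega) (by omega)
  · simp only [Finset.mem_insert, Finset.mem_singleton, not_or]
    exact ⟨h _ _ (by omega) (by omega) (by omega), h _ _ (by omega) (by omega) (by omega)⟩
  · simp only [Finset.mem_insert, Finset.mem_singleton, not_or]
    exact ⟨h _ _ (by omega) (by omega) (by omega), h _ _ (by omega) (by omega) (by omega),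
      h _ _ (by omega) (by omega) (by omega)⟩

lemma card_connSet (n m : ℕ) (hm : 3 ≤ m) (hnm : n = 2 * m) : (connSet n m).card = 4 := by
  rw [Finset.card_eq_sum_ones, sum_connSet n m hm hnm]
  norm_num

/-! ### Sufficiency -/

lemma PST_sufficient (n m : ℕ) [NeZero n] (hm : 3 ≤ m) (hnm : n = 2 * m) (τ : ℕ)
    (h4 : τ % 4 = 2) (hd : m ∣ τ) :
    PST n (connSet n m) τ 1 (DihedralGroup.r (m : ZMod n)) := by
  have hP : disc n (connSet n m) = (4 : ℂ)⁻¹ • (leftMat n (.r 1) + leftMat n (.r 1) ^ (m - 1)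
      + leftMat n (.r 1) ^ (m + 1) + leftMat n (.r 1) ^ (2 * m - 1)) := by
    rw [disc, card_connSet n m hm hnm, adjC_eq_sum, sum_connSet n m hm hnm]
    simp only [leftMat_r, pow_one, ← hnm]
    simp only [Nat.cast_ofNat, add_assoc]
  have hx : leftMat n (.r 1) ^ (2 * m) = 1 := by
    rw [← hnm, leftMat_pow, DihedralGroup.r_one_pow_n, leftMat_one]
  rw [PST, chebP, hP, aeval_T_shift m (by omega) _ hx τ h4 hd, ← leftMat_r]
  ext u
  simp [leftMat, Pi.single_apply]

/-! ### Necessity -/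

/-- A left eigenvector of `M` is a left eigenvector of every polynomial in `M`. -/
lemma vecMul_aeval {ι : Type*} [Fintype ι] [DecidableEq ι] (M : Matrix ι ι ℂ) (w : ι → ℂ) (l : ℂ)
    (hw : w ᵥ* M = l • w) (q : ℂ[X]) : w ᵥ* aeval M q = q.eval l • w := by
  induction q using Polynomial.induction_on' with
  | add p q hp hq => rw [map_add, Matrix.vecMul_add, hp, hq, eval_add, add_smul]
  | monomial k a =>
    have : ∀ k : ℕ, w ᵥ* M ^ k = l ^ k • w := by
      intro k
      induction k with
      | zero => simp
      | succ k ih => rw [pow_succ, ← Matrix.vecMul_vecMul, ih, Matrix.smul_vecMul, hw, smul_smul,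
          pow_succ]
    rw [aeval_monomial, eval_monomial, ← Algebra.smul_def, Matrix.vecMul_smul, this, smul_smul]

/-- Hypothesis `hw` says that `w` is a left eigenvector of `P` with eigenvalue `l`; pairing it
with `T_τ(P) e_u = e_v` relates its values at `u` and `v`. -/
lemma PST_pairing (n m : ℕ) [NeZero n] (hm : 3 ≤ m) (hnm : n = 2 * m) (τ : ℕ)
    (u v : DihedralGroup n) (h : PST n (connSet n m) τ u v) (w : DihedralGroup n → ℂ) (l : ℂ)
    (hw : ∀ g, w (.r (1 : ℕ) * g) + (w (.r (m - 1 : ℕ) * g) + (w (.r (m + 1 : ℕ) * g)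
      + w (.r (n - 1 : ℕ) * g))) = 4 * l * w g) :
    w v = (Chebyshev.T ℂ τ).eval l * w u := by
  have hP : w ᵥ* disc n (connSet n m) = l • w := by
    ext g
    rw [disc, card_connSet n m hm hnm, adjC_eq_sum, Matrix.vecMul_smul, Matrix.vecMul_sum]
    have : ∀ s : DihedralGroup n, (w ᵥ* leftMat n s) g = w (s * g) := by
      intro s
      simp [Matrix.vecMul, dotProduct, leftMat]
    simp only [Pi.smul_apply, Finset.sum_apply, this, smul_eq_mul]
    rw [sum_connSet n m hm hnm fun s => w (s * g), hw]
    push_cast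
    ring
  have h1 := vecMul_aeval _ w l hP (Chebyshev.T ℂ τ)
  have h2 : w ⬝ᵥ (chebP n (connSet n m) τ *ᵥ Pi.single u 1) = w ⬝ᵥ Pi.single v 1 := by
    rw [show _ = _ from h]
  rw [Matrix.dotProduct_mulVec, chebP, h1] at h2
  simpa using h2.symm

/-- The index `k` of `a^k` or `b a^k`. -/
def rotIdx {n : ℕ} : DihedralGroup n → ZMod n
  | .r k => k
  | .sr k => k

lemma stdAddChar_half (n m : ℕ) [NeZero n] (hm : 3 ≤ m) (hnm : n = 2 * m) :
    ZMod.stdAddChar (m : ZMod n) = -1 := by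
  have h := ZMod.stdAddChar_coe (N := n) (m : ℤ)
  push_cast at h
  rw [h, ← Complex.exp_pi_mul_I, hnm]
  congr 1
  have : (m : ℂ) ≠ 0 := by exact_mod_cast (by omega : m ≠ 0)
  push_cast
  field_simp

lemma PST_necessary (n m : ℕ) [NeZero n] (hm : 3 ≤ m) (hnm : n = 2 * m) (τ : ℕ)
    (u v : DihedralGroup n) (huv : u ≠ v) (h : PST n (connSet n m) τ u v) :
    τ % 4 = 2 ∧ m ∣ τ := by
  have hm0 : (m : ℂ) ≠ 0 := by exact_mod_cast (by omega : m ≠ 0)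
  let ψ : AddChar (ZMod n) ℂ := ZMod.stdAddChar
  have hψm : ψ (m : ZMod n) = -1 := stdAddChar_half n m hm hnm
  have hminv : ψ (-(m : ZMod n)) = -1 := by
    have : ψ (m : ZMod n) * ψ (-(m : ZMod n)) = 1 := by rw [← AddChar.map_add_eq_mul]; simp
    rw [hψm] at this
    linear_combination -this
  have c1 : ((m - 1 : ℕ) : ZMod n) = m + -1 := by
    rw [Nat.cast_sub (by omega)]; push_cast; ring
  have c2 : ((n - 1 : ℕ) : ZMod n) = -1 := by
    rw [Nat.cast_sub (by omega)]; simp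
  -- The sign vector has eigenvalue `1`, so `u` and `v` lie in the same copy of the circulant.
  have h1 := PST_pairing n m hm hnm τ u v h (w2 n) 1 (by
    rintro (k | k) <;> simp [w2] <;> norm_num)
  rw [Chebyshev.T_eval_one, one_mul] at h1
  -- The faithful character has eigenvalue `0`, because `ψ m = -1`.
  have h2 := PST_pairing n m hm hnm τ u v h (fun g => ψ (rotIdx g)) 0 (by
    rintro (k | k) <;> rw [c1, c2]
    · simp only [DihedralGroup.r_mul_r, rotIdx, Nat.cast_add, Nat.cast_one,
        AddChar.map_add_eq_mul, hψm]
      ring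
    · simp only [DihedralGroup.r_mul_sr, rotIdx, Nat.cast_add, Nat.cast_one, sub_eq_add_neg,
        neg_add, neg_neg, AddChar.map_add_eq_mul, hminv]
      ring)
  -- The eigenvalue of the squared character.
  have hcos : Complex.cos (2 * Real.pi / m) = (ψ 1 ^ 2 + ψ (-1) ^ 2) / 2 := by
    have e1 : ψ 1 ^ 2 = Complex.exp (2 * Real.pi / m * Complex.I) := by
      have h := ZMod.stdAddChar_coe (N := n) 1
      push_cast at h
      rw [show ψ 1 = _ from h, ← Complex.exp_nat_mul, hnm]
      congr 1
      push_cast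
      field_simp
    have e2 : ψ (-1) ^ 2 = Complex.exp (-(2 * Real.pi / m) * Complex.I) := by
      have h := ZMod.stdAddChar_coe (N := n) (-1)
      push_cast at h
      rw [show ψ (-1) = _ from h, ← Complex.exp_nat_mul, hnm]
      congr 1
      push_cast
      field_simp
    rw [e1, e2, Complex.cos]
  have h3 := PST_pairing n m hm hnm τ u v h (fun g => ψ (rotIdx g) ^ 2)
    (Complex.cos (2 * Real.pi / m)) (by
    rw [hcos]
    rintro (k | k) <;> rw [c1, c2]
    · simp only [DihedralGroup.r_mul_r, rotIdx, Nat.cast_add, Nat.cast_one,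
        AddChar.map_add_eq_mul, hψm]
      ring
    · simp only [DihedralGroup.r_mul_sr, rotIdx, Nat.cast_add, Nat.cast_one, sub_eq_add_neg,
        neg_add, neg_neg, AddChar.map_add_eq_mul, hminv]
      ring)
  have hne : ∀ k, ψ k ≠ 0 := fun k => (ψ.val_isUnit k).ne_zero
  have hτ : τ % 4 = 2 := by
    by_contra hc
    rw [T_zero_cases, if_neg hc] at h2
    split_ifs at h2
    · rw [one_mul] at h2
      have h5 := ZMod.injective_stdAddChar h2
      rcases u with k | k <;> rcases v with l | l <;> simp only [rotIdx] at h5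
      · exact huv (by rw [h5])
      · norm_num [w2] at h1
      · norm_num [w2] at h1
      · exact huv (by rw [h5])
    · exact hne _ (by simpa using h2)
  refine ⟨hτ, ?_⟩
  rw [T_zero_cases, if_pos hτ] at h2
  rw [h2, Chebyshev.T_complex_cos] at h3
  have h4 : Complex.cos (((τ : ℤ) : ℂ) * (2 * Real.pi / m)) = 1 := by
    have h0 := pow_ne_zero 2 (hne (rotIdx u))
    apply mul_right_cancel₀ h0
    rw [← h3]; ring
  have h5 : Real.cos (τ * (2 * Real.pi / m)) = 1 := by
    have : ((Real.cos (τ * (2 * Real.pi / m)) : ℝ) : ℂ) = 1 := by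
      push_cast
      simpa using h4
    exact_mod_cast this
  obtain ⟨k, hk⟩ := (Real.cos_eq_one_iff _).mp h5
  have hmR : (m : ℝ) ≠ 0 := by exact_mod_cast (by omega : m ≠ 0)
  have hk' : (k : ℝ) * m = τ := by
    have hpi := Real.pi_ne_zero
    field_simp at hk
    linarith
  have : (m : ℤ) ∣ (τ : ℤ) := ⟨k, by rw [mul_comm]; exact_mod_cast hk'.symm⟩
  exact_mod_cast this

/-! ### The three cases -/

lemma PST_min (n m : ℕ) [NeZero n] (hm : 3 ≤ m) (hnm : n = 2 * m) (τ : ℕ) (h4 : τ % 4 = 2)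
    (hd : m ∣ τ) (hmin : ∀ σ, σ < τ → σ % 4 = 2 → ¬ m ∣ σ) :
    exhibitsMinPST n (connSet n m) τ := by
  refine ⟨⟨1, _, ?_, PST_sufficient n m hm hnm τ h4 hd⟩, ?_⟩
  · have := r_natCast_ne n 0 m (by omega) (by omega) (by omega)
    rwa [Nat.cast_zero, ← DihedralGroup.one_def] at this
  · intro σ _ hσ u v huv hp
    obtain ⟨a, b⟩ := PST_necessary n m hm hnm σ u v huv hp
    exact hmin σ hσ a b

theorem stmt_16 (n m : ℕ) [NeZero n] (hm : 3 ≤ m) (hnm : n = 2 * m)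
    (S : Finset (DihedralGroup n))
    (hS : S = {DihedralGroup.r ((1 : ℕ) : ZMod n), DihedralGroup.r ((m - 1 : ℕ) : ZMod n),
               DihedralGroup.r ((m + 1 : ℕ) : ZMod n), DihedralGroup.r ((n - 1 : ℕ) : ZMod n)}) :
    (Odd m → exhibitsMinPST n S (2 * m)) ∧
    (m % 4 = 0 → ∀ τ : ℕ, 1 ≤ τ → ∀ u v : DihedralGroup n, u ≠ v → ¬ PST n S τ u v) ∧
    (m % 4 = 2 → exhibitsMinPST n S m) := by
  obtain rfl : S = connSet n m := hS
  refine ⟨fun hodd => ?_, fun h4 τ _ u v huv hp => ?_, fun h4 => ?_⟩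
  · have := Nat.odd_iff.mp hodd
    refine PST_min n m hm hnm _ (by omega) ⟨2, by ring⟩ ?_
    -- an even multiple of the odd number `m` is a multiple of `2 * m`
    intro σ hσ hσ4 hd
    have h2 : 2 * m ∣ σ :=
      Nat.Coprime.mul_dvd_of_dvd_of_dvd (Nat.coprime_two_left.mpr hodd) (by omega) hd
    have := Nat.le_of_dvd (by omega) h2
    omega
  · obtain ⟨a, b⟩ := PST_necessary n m hm hnm τ u v huv hp
    have : 4 ∣ τ := (Nat.dvd_of_mod_eq_zero h4).trans b
    omega
  · refine PST_min n m hm hnm m h4 dvd_rfl ?_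
    intro σ hσ hσ4 hd
    have := Nat.le_of_dvd (by omega) hd
    omega

end PaperPST
end
end

section
/- Let n = 2m be even and let S = b⟨a⟩ = {b a^k : 0 ≤ k ≤ n−1} ⊆ D_n. Then Cay(D_n, S) exhibits PST (i.e., PST occurs between some pair of distinct vertices at some positive time) if and only if n = 2. -/
/-!
`Cay(D_n, b⟨a⟩)` is the complete bipartite graph `K_{n,n}` whose parts are the rotations and the
reflections. The rows of `P` depend only on the part of their index, so every vector `P *ᵥ f` is
constant on each part. Writing a polynomial `p` as `X q + c` gives `p(P) e_u = c e_u + P (q(P) e_u)`,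
whose entries away from `u` are constant on each part (`aeval_disc_single`). If
`T_τ(P) e_u = e_v` with `v ≠ u` and `n > 2`, the part of `v` contains a third vertex `w ∉ {u, v}`,
and the entries of `e_v` at `v` and `w` differ: a contradiction. For `n = 2` the graph is the
4-cycle, where `T_2(P) = 2P² - 1` exchanges antipodal vertices.
-/

open Polynomial Matrix

noncomputable section

namespace PaperPST

/-- Adjacency means lying in different parts, so the rows of `P` indexed by
two vertices in the same part agree. -/
lemma disc_row_eq (n : ℕ) [NeZero n] {x y : DihedralGroup n} (hxy : isRot x = isRot y)
    (z : DihedralGroup n) :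
    disc n ((Finset.range n).image fun k : ℕ => DihedralGroup.sr (k : ZMod n)) x z =
      disc n ((Finset.range n).image fun k : ℕ => DihedralGroup.sr (k : ZMod n)) y z := by
  have hmem : ∀ g : DihedralGroup n,
      g ∈ ((Finset.range n).image fun k : ℕ => DihedralGroup.sr (k : ZMod n)) ↔
        isRot g = false := by
    intro g
    cases g with
    | r i => simp [isRot]
    | sr i =>
      simp only [Finset.mem_image, Finset.mem_range, isRot, iff_true]
      exact ⟨i.val, ZMod.val_lt i, by simp⟩
  simp only [disc, adjC, Matrix.smul_apply, Matrix.of_apply, hmem]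
  cases x <;> cases y <;> cases z <;> simp_all [isRot]

/-- For every polynomial `p`, the entries of `p(P) e_u` at vertices other than `u` depend only on
the part of the vertex. -/
lemma aeval_disc_single (n : ℕ) [NeZero n] (p : ℂ[X]) {u x y : DihedralGroup n}
    (hxy : isRot x = isRot y) (hx : x ≠ u) (hy : y ≠ u) :
    (aeval (disc n ((Finset.range n).image fun k : ℕ => DihedralGroup.sr (k : ZMod n))) p *ᵥ
        Pi.single u 1) x =
      (aeval (disc n ((Finset.range n).image fun k : ℕ => DihedralGroup.sr (k : ZMod n))) p *ᵥ
        Pi.single u 1) y := by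
  have hrow := disc_row_eq n hxy
  rw [← Polynomial.X_mul_divX_add p]
  generalize disc n _ = P at *
  simp only [map_add, map_mul, aeval_X, aeval_C, Matrix.add_mulVec, ← Matrix.mulVec_mulVec,
    Pi.add_apply]
  congr 1
  · simp only [Matrix.mulVec, dotProduct, hrow]
  · simp [Matrix.algebraMap_eq_diagonal, hx, hy]

/-- If `n > 2`, each part contains a vertex distinct from two given ones. -/
lemma exists_third (n : ℕ) [NeZero n] (hn : 2 < n) (u v : DihedralGroup n) :
    ∃ w, isRot w = isRot v ∧ w ≠ u ∧ w ≠ v := by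
  have hz : ∀ i j : ZMod n, ∃ k, k ≠ i ∧ k ≠ j := by
    intro i j
    have hc : ({i, j} : Finset (ZMod n)).card < Fintype.card (ZMod n) := by
      rw [ZMod.card]
      exact lt_of_le_of_lt Finset.card_le_two hn
    obtain ⟨k, hk⟩ := Finset.exists_mem_notMem_of_card_lt_card (t := Finset.univ) hc
    simp only [Finset.mem_univ, Finset.mem_insert, Finset.mem_singleton, not_or, true_and] at hk
    exact ⟨k, hk⟩
  cases u with
  | r i =>
    cases v with
    | r j => obtain ⟨k, h1, h2⟩ := hz i j; exact ⟨.r k, rfl, by simpa, by simpa⟩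
    | sr j => obtain ⟨k, h1, h2⟩ := hz i j; exact ⟨.sr k, rfl, by simp, by simpa⟩
  | sr i =>
    cases v with
    | r j => obtain ⟨k, h1, h2⟩ := hz i j; exact ⟨.r k, rfl, by simp, by simpa⟩
    | sr j => obtain ⟨k, h1, h2⟩ := hz i j; exact ⟨.sr k, rfl, by simpa, by simpa⟩

/-- On the 4-cycle `Cay(D_2, {b, ba})`, state transfer occurs from `1` to `a` at time `2`. -/
lemma pst_two : PST 2 ((Finset.range 2).image fun k : ℕ => DihedralGroup.sr (k : ZMod 2)) 2
    (.r 0) (.r 1) := by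
  have huniv : (Finset.univ : Finset (DihedralGroup 2)) = {.r 0, .r 1, .sr 0, .sr 1} := by decide
  have hS : ((Finset.range 2).image fun k : ℕ => (DihedralGroup.sr (k : ZMod 2))) =
      {.sr 0, .sr 1} := by decide
  have hcard : ({.sr 0, .sr 1} : Finset (DihedralGroup 2)).card = 2 := by decide
  have h2 : Polynomial.Chebyshev.T ℂ ((2 : ℕ) : ℤ) = X * X + X * X - 1 :=
    (Polynomial.Chebyshev.T_two ℂ).trans (by ring)
  rw [PST, chebP, h2, hS]
  have hP : ∀ x y, disc 2 {.sr 0, .sr 1} x y = if isRot x = isRot y then 0 else (2 : ℂ)⁻¹ := by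
    intro x y
    have : ∀ x y : DihedralGroup 2,
        x * y⁻¹ ∈ ({.sr 0, .sr 1} : Finset (DihedralGroup 2)) ↔ ¬ isRot x = isRot y := by decide
    simp only [disc, adjC, hcard, Matrix.smul_apply, Matrix.of_apply, this]
    split_ifs <;> simp_all
  generalize disc 2 _ = P at hP
  have hPP : ∀ x y, (P * P) x y = if isRot x = isRot y then (2 : ℂ)⁻¹ else 0 := by
    intro x y
    rw [Matrix.mul_apply, huniv, Finset.sum_insert (by decide), Finset.sum_insert (by decide),
      Finset.sum_insert (by decide), Finset.sum_singleton]
    simp only [hP]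
    cases x <;> cases y <;> norm_num [isRot]
  simp only [map_sub, map_add, map_mul, aeval_X, map_one]
  ext x
  simp only [Matrix.mulVec_single_one, Matrix.col_apply, Matrix.sub_apply, Matrix.add_apply, hPP]
  rcases x with i | i <;> fin_cases i <;>
    simp +decide [Matrix.one_apply, Pi.single_apply] <;> norm_num

theorem stmt_17 (n m : ℕ) [NeZero n] (hnm : n = 2 * m)
    (S : Finset (DihedralGroup n))
    (hS : S = (Finset.range n).image fun k : ℕ => DihedralGroup.sr (k : ZMod n)) :
    (∃ τ : ℕ, 1 ≤ τ ∧ ∃ u v : DihedralGroup n, u ≠ v ∧ PST n S τ u v) ↔ n = 2 := by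
  subst hS
  constructor
  · rintro ⟨τ, -, u, v, huv, h⟩
    by_contra hn
    have hn0 : n ≠ 0 := NeZero.ne n
    obtain ⟨w, hw, hwu, hwv⟩ := exists_third n (by omega) u v
    have key := aeval_disc_single n (Polynomial.Chebyshev.T ℂ τ) hw hwu huv.symm
    rw [PST, chebP] at h
    simp [h, hwv] at key
  · rintro rfl
    exact ⟨2, by norm_num, .r 0, .r 1, by decide, by convert pst_two⟩

end PaperPST
end
end

section
/- Let n = 2m be even and let S ⊆ D_n be either S = b⟨a²⟩ = {b a^{2k} : 0 ≤ k ≤ m−1} or S = ba⟨a²⟩ = {b a^{2k+1} : 0 ≤ k ≤ m−1}. Then Cay(D_n, S) exhibits PST (i.e., PST occurs between some pair of distinct vertices at some positive time) if and only if n ∈ {2, 4}. -/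
/-! The graph is a disjoint union of two complete bipartite graphs `K_{m,m}`: colouring the vertices
by `D_n → D_n/⟨a²⟩ ≅ (ℤ/2)²`, two vertices are adjacent iff their colours differ by the fixed
nonzero colour `s` of `S`. Hence `P²` has entry `1/m` on pairs of equal colour and `0` elsewhere,
and `P³ = P` (`disc_sq_apply`, `disc_cube`). The Chebyshev recurrence then makes `T_τ(P)` periodic
in `τ` with values `1, P, 2P² - 1, P` (`chebP_cases`). Off the diagonal these matrices only
have entries `0`, `1/m` and `2/m`, so PST between distinct vertices forces `m = 1` or `m = 2`;
conversely PST happens at time `1` if `m = 1` and at time `2` if `m = 2` (`exists_PST_iff`). -/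

open Polynomial Matrix

noncomputable section

namespace PaperPST

section Coloring

variable {n : ℕ} {S : Finset (DihedralGroup n)} {Q : Type*} [AddCommGroup Q]
  [DecidableEq Q] {f : DihedralGroup n → Q} {s : Q}

lemma disc_apply (hf : ∀ u w, u * w⁻¹ ∈ S ↔ f u = f w + s) (u v : DihedralGroup n) :
    disc n S u v = if f u = f v + s then (S.card : ℂ)⁻¹ else 0 := by
  simp [disc, adjC, hf]

variable [NeZero n]

/-- Every colour class that is the shift by `s` of an occurring colour is a translate of `S`. -/
lemma card_fiber (hf : ∀ u w, u * w⁻¹ ∈ S ↔ f u = f w + s) (v : DihedralGroup n) :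
    (Finset.univ.filter fun w => f w = f v + s).card = S.card := by
  have : (Finset.univ.filter fun w => f w = f v + s) = S.image (· * v) := by
    ext w
    simp only [Finset.mem_filter, Finset.mem_univ, true_and, Finset.mem_image, ← hf]
    constructor
    · intro h
      exact ⟨_, h, by simp⟩
    · rintro ⟨x, hx, rfl⟩
      simpa using hx
  rw [this, Finset.card_image_of_injective _ (mul_left_injective v)]

lemma disc_sq_apply (hf : ∀ u w, u * w⁻¹ ∈ S ↔ f u = f w + s) (hs : s + s = 0)
    (hS : S.Nonempty) (u v : DihedralGroup n) :
    (disc n S * disc n S) u v = if f u = f v then (S.card : ℂ)⁻¹ else 0 := by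
  have hc : (S.card : ℂ) ≠ 0 := by simpa using hS.ne_empty
  have key : ∀ w, disc n S u w * disc n S w v =
      if f w = f v + s then (if f u = f v then (S.card : ℂ)⁻¹ * (S.card : ℂ)⁻¹ else 0) else 0 := by
    intro w
    rw [disc_apply hf, disc_apply hf]
    by_cases h : f w = f v + s
    · simp [h, add_assoc, hs]
    · simp [h]
  rw [Matrix.mul_apply, Finset.sum_congr rfl fun w _ => key w, ← Finset.sum_filter,
    Finset.sum_const, card_fiber hf]
  split_ifs
  · rw [nsmul_eq_mul, ← mul_assoc, mul_inv_cancel₀ hc, one_mul]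
  · simp

lemma disc_cube (hf : ∀ u w, u * w⁻¹ ∈ S ↔ f u = f w + s) (hs : s + s = 0)
    (hS : S.Nonempty) : disc n S * (disc n S * disc n S) = disc n S := by
  have hc : (S.card : ℂ) ≠ 0 := by simpa using hS.ne_empty
  rw [← mul_assoc]
  ext u v
  have key : ∀ w, (disc n S * disc n S) u w * disc n S w v =
      if f w = f v + s then
        (if f u = f v + s then (S.card : ℂ)⁻¹ * (S.card : ℂ)⁻¹ else 0) else 0 := by
    intro w
    rw [disc_sq_apply hf hs hS, disc_apply hf]
    by_cases h : f w = f v + s <;> simp [h]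
  rw [Matrix.mul_apply, Finset.sum_congr rfl fun w _ => key w, ← Finset.sum_filter,
    Finset.sum_const, card_fiber hf, disc_apply hf]
  split_ifs
  · rw [nsmul_eq_mul, ← mul_assoc, mul_inv_cancel₀ hc, one_mul]
  · simp

/-- Since `P³ = P`, the sequence `T_τ(P)` runs through `1, P, 2P² - 1, P` periodically. The four
alternatives describe two consecutive terms, as needed for the two-step recurrence. -/
lemma chebP_cases (h3 : disc n S * (disc n S * disc n S) = disc n S) (τ : ℕ) :
    (chebP n S τ = 1 ∧ chebP n S (τ + 1) = disc n S) ∨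
    (chebP n S τ = disc n S ∧ chebP n S (τ + 1) = 2 * (disc n S * disc n S) - 1) ∨
    (chebP n S τ = 2 * (disc n S * disc n S) - 1 ∧ chebP n S (τ + 1) = disc n S) ∨
    (chebP n S τ = disc n S ∧ chebP n S (τ + 1) = 1) := by
  have hrec : ∀ k : ℕ, chebP n S (k + 1 + 1) =
      2 * (disc n S * chebP n S (k + 1)) - chebP n S k := by
    intro k
    have h := Polynomial.Chebyshev.T_add_two ℂ (k : ℤ)
    have e : ((k + 1 + 1 : ℕ) : ℤ) = (k : ℤ) + 2 := by push_cast; ring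
    simp only [chebP]
    rw [e, h]
    have two : aeval (disc n S) (2 : ℂ[X]) = 2 := map_ofNat _ 2
    simp [mul_assoc, two]
  induction τ with
  | zero => left; simp [chebP]
  | succ k ih =>
    rcases ih with ⟨h1, h2⟩ | ⟨h1, h2⟩ | ⟨h1, h2⟩ | ⟨h1, h2⟩
    · right; left
      exact ⟨h2, by rw [hrec, h1, h2]⟩
    · right; right; left
      refine ⟨h2, ?_⟩
      have : disc n S * (2 * (disc n S * disc n S) - 1) = disc n S := by
        rw [mul_sub, mul_one, two_mul, mul_add, h3, add_sub_cancel_right]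
      rw [hrec, h1, h2, this, two_mul, add_sub_cancel_right]
    · right; right; right
      exact ⟨h2, by rw [hrec, h1, h2]; abel⟩
    · left
      exact ⟨h2, by rw [hrec, h1, h2, mul_one, two_mul, add_sub_cancel_right]⟩

lemma PST_iff (τ : ℕ) (u v : DihedralGroup n) :
    PST n S τ u v ↔ ∀ w, chebP n S τ w u = if w = v then 1 else 0 := by
  simp [PST, funext_iff, Pi.single_apply]

lemma exists_PST_iff (hf : ∀ u w, u * w⁻¹ ∈ S ↔ f u = f w + s) (hs : s + s = 0) (hs0 : s ≠ 0)
    (hS : S.Nonempty) :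
    (∃ τ : ℕ, 1 ≤ τ ∧ ∃ u v : DihedralGroup n, u ≠ v ∧ PST n S τ u v) ↔
      S.card = 1 ∨ S.card = 2 := by
  have h3 := disc_cube hf hs hS
  have hfS : ∀ x, x ∈ S ↔ f x = f 1 + s := fun x => by simpa using hf x 1
  obtain ⟨x, hx⟩ := hS
  have hS : S.Nonempty := ⟨x, hx⟩
  constructor
  · rintro ⟨τ, -, u, v, huv, h⟩
    have hv := (PST_iff τ u v).1 h v
    rw [if_pos rfl] at hv
    have hP : chebP n S τ = disc n S → S.card = 1 := by
      intro e
      rw [e, disc_apply hf] at hv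
      split_ifs at hv
      · exact_mod_cast inv_eq_one.1 hv
      · exact absurd hv zero_ne_one
    rcases chebP_cases h3 τ with ⟨e, -⟩ | ⟨e, -⟩ | ⟨e, -⟩ | ⟨e, -⟩
    · rw [e, Matrix.one_apply_ne huv.symm] at hv
      exact absurd hv zero_ne_one
    · exact Or.inl (hP e)
    · right
      rw [e, two_mul, Matrix.sub_apply, Matrix.add_apply, Matrix.one_apply_ne huv.symm,
        disc_sq_apply hf hs hS] at hv
      have hc : (S.card : ℂ) ≠ 0 := by simpa using hS.ne_empty
      split_ifs at hv
      · field_simp at hv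
        have : (S.card : ℂ) = 2 := by linear_combination -hv
        exact_mod_cast this
      · simp at hv
    · exact Or.inl (hP e)
  · rintro (h | h)
    · refine ⟨1, le_rfl, 1, x, ?_, (PST_iff _ _ _).2 fun w => ?_⟩
      · rintro rfl
        have := (hfS 1).1 hx
        exact hs0 (by simpa using this)
      · have e : chebP n S 1 = disc n S := by simp [chebP]
        obtain ⟨y, rfl⟩ := Finset.card_eq_one.1 h
        obtain rfl : x = y := by simpa using hx
        rw [e, disc_apply hf]
        simp [← hfS]
    · -- The target vertex is the only other element of the colour class of `1`.
      have hcard : (Finset.univ.filter fun w => f w = f 1).card = 2 := by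
        have := card_fiber hf x
        rwa [(hfS x).1 hx, add_assoc, hs, add_zero, h] at this
      have h1 : (1 : DihedralGroup n) ∈ Finset.univ.filter fun w => f w = f 1 := by simp
      obtain ⟨v, hv⟩ := Finset.card_eq_one.1
        (show ((Finset.univ.filter fun w => f w = f 1).erase 1).card = 1 by
          rw [Finset.card_erase_of_mem h1, hcard])
      have hv' : ∀ w, (w ≠ 1 ∧ f w = f 1) ↔ w = v := by
        intro w
        have := Finset.ext_iff.1 hv w
        simpa using this
      have hv1 := (hv' v).2 rfl
      refine ⟨2, by norm_num, 1, v, hv1.1.symm, (PST_iff _ _ _).2 fun w => ?_⟩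
      have e : chebP n S 2 = 2 * (disc n S * disc n S) - 1 := by
        have two : aeval (disc n S) (2 : ℂ[X]) = 2 := map_ofNat _ 2
        simp [chebP, sq, two, Polynomial.Chebyshev.T_two]
      rw [e, two_mul, Matrix.sub_apply, Matrix.add_apply, disc_sq_apply hf hs hS, h,
        Matrix.one_apply]
      simp only [← hv' w]
      by_cases hw : w = 1
      · subst hw; norm_num
      · by_cases hw' : f w = f 1 <;> simp [hw, hw']; norm_num

end Coloring

/-- The quotient map `D_n → D_n/⟨a²⟩ ≅ (ℤ/2)²` for even `n`. -/
def color {n : ℕ} (h : 2 ∣ n) : DihedralGroup n → ZMod 2 × ZMod 2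
  | .r i => (0, ZMod.castHom h (ZMod 2) i)
  | .sr i => (1, ZMod.castHom h (ZMod 2) i)

lemma color_adj {n : ℕ} (h : 2 ∣ n) (S : Finset (DihedralGroup n)) (c : ZMod 2)
    (hr : ∀ i, DihedralGroup.r i ∉ S)
    (hsr : ∀ i, DihedralGroup.sr i ∈ S ↔ ZMod.castHom h (ZMod 2) i = c)
    (u w : DihedralGroup n) : u * w⁻¹ ∈ S ↔ color h u = color h w + (1, c) := by
  have key : ∀ x y z : ZMod 2, x - y = z ↔ x = y + z := by decide
  have key' : ∀ x y z : ZMod 2, y = x + z ↔ x = y + z := by decide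
  rcases u with i | i <;> rcases w with j | j <;>
    simp only [DihedralGroup.inv_r, DihedralGroup.inv_sr, DihedralGroup.r_mul_r,
      DihedralGroup.r_mul_sr, DihedralGroup.sr_mul_r, DihedralGroup.sr_mul_sr, hr, hsr, color,
      Prod.mk_add_mk, Prod.mk.injEq, ← sub_eq_add_neg, map_sub, key, false_iff, not_and]
  · exact fun h0 => absurd h0 (by decide)
  · exact ⟨fun h0 => ⟨by decide, (key' _ _ _).1 h0⟩, fun h0 => (key' _ _ _).2 h0.2⟩
  · exact ⟨fun h0 => ⟨by decide, h0⟩, fun h0 => h0.2⟩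
  · exact fun h0 => absurd h0 (by decide)

/-- The two connection sets `{b a^{2k+e} : k < m}`, `e ∈ {0, 1}`, treated uniformly. -/
lemma main_aux (n m : ℕ) [NeZero n] (hnm : n = 2 * m) (e : ℕ) (he : e < 2) :
    (∃ τ : ℕ, 1 ≤ τ ∧ ∃ u v : DihedralGroup n, u ≠ v ∧
      PST n ((Finset.range m).image fun k => DihedralGroup.sr ((2 * k + e : ℕ) : ZMod n)) τ u v) ↔
      n = 2 ∨ n = 4 := by
  have hn : n ≠ 0 := NeZero.ne n
  have h2 : 2 ∣ n := ⟨m, hnm⟩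
  have hval : ∀ k < m, ((2 * k + e : ℕ) : ZMod n).val = 2 * k + e := fun k hk =>
    ZMod.val_cast_of_lt (by omega)
  have hcard : ((Finset.range m).image
      fun k => DihedralGroup.sr ((2 * k + e : ℕ) : ZMod n)).card = m := by
    rw [Finset.card_image_of_injOn, Finset.card_range]
    intro k hk l hl hkl
    have := congrArg ZMod.val (DihedralGroup.sr.inj hkl)
    rw [hval k (by simpa using hk), hval l (by simpa using hl)] at this
    omega
  rw [exists_PST_iff (color_adj h2 _ (e : ZMod 2) (by simp) ?_) (by
      have : ∀ c : ZMod 2, ((1, c) : ZMod 2 × ZMod 2) + (1, c) = 0 := by decide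
      exact this _)
    (by simp) (Finset.card_pos.1 (by omega)), hcard]
  · omega
  · intro i
    have hi : ZMod.castHom h2 (ZMod 2) i = (i.val : ZMod 2) := by simp
    rw [hi, ZMod.natCast_eq_natCast_iff']
    simp only [Finset.mem_image, Finset.mem_range, DihedralGroup.sr.injEq]
    constructor
    · rintro ⟨k, hk, rfl⟩
      rw [hval k hk]
      omega
    · intro hmod
      have hlt := ZMod.val_lt i
      refine ⟨i.val / 2, by omega, ?_⟩
      rw [show 2 * (i.val / 2) + e = i.val by omega, ZMod.natCast_zmod_val]

theorem stmt_18 (n m : ℕ) [NeZero n] (hnm : n = 2 * m)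
    (S : Finset (DihedralGroup n))
    (hS : S = ((Finset.range m).image fun k => DihedralGroup.sr ((2 * k : ℕ) : ZMod n)) ∨
          S = ((Finset.range m).image fun k => DihedralGroup.sr ((2 * k + 1 : ℕ) : ZMod n))) :
    (∃ τ : ℕ, 1 ≤ τ ∧ ∃ u v : DihedralGroup n, u ≠ v ∧ PST n S τ u v) ↔ n = 2 ∨ n = 4 := by
  rcases hS with rfl | rfl
  · exact main_aux n m hnm 0 (by norm_num)
  · exact main_aux n m hnm 1 (by norm_num)

end PaperPST
end
end
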